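/- Moving particle lemma for the interchange process: on a finite connected weighted graph $(V,c)$, for any $x\neq y$ in $V$ and any $f:S_V\to\mathbb{R}$, $\frac12\,\nu[(f\circ\tau_{xy}-f)^2] \leq R_{\mathrm{eff}}(x,y)\cdot \frac12\sum_{\{z,w\}} c_{zw}\,\nu[(f\circ\tau_{zw}-f)^2]$, where $\nu$ is the uniform measure on the symmetric group $S_V$ and $R_{\mathrm{eff}}$ is the effective resistance of the graph. -/

import Mathlib

open Finset

noncomputable section

def permExp {V : Type*} [Fintype V] [DecidableEq V] (g : Equiv.Perm V → ℝ) : ℝ :=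
  (∑ η : Equiv.Perm V, g η) / (Fintype.card (Equiv.Perm V))

def elEnergy {V : Type*} [Fintype V] (c : V → V → ℝ) (h : V → ℝ) : ℝ :=
  (1 / 2) * ∑ z, ∑ w, c z w * (h z - h w) ^ 2

def ceff {V : Type*} [Fintype V] (c : V → V → ℝ) (x y : V) : ℝ :=
  sInf {E : ℝ | ∃ h : V → ℝ, h x = 1 ∧ h y = 0 ∧ elEnergy c h = E}

/-!
Eliminate the vertices other than `x` and `y` one at a time by the star-mesh transform. Each
elimination can only increase the effective conductance, because a potential on the remaining
vertices extends to the eliminated one by its weighted mean without changing the energy, and by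
the octopus inequality of Caputo, Liggett and Richthammer it does not increase the Dirichlet form
of the interchange process. On the two-point network that is left the claim is an equality.

For the octopus inequality let `c` be weights of total mass zero, negative only at `v`, and let
`P` be the sum of `c x * c y` times the operator of the transposition `(x y)`; the claim is
`0 ≤ P`. Expanding `P * P` as a sum over four points and symmetrizing over pairings gives
`6 * P ^ 2 = 12 * (∑ c x ^ 2) * P + ∑ c x * c y * c z * c w * K x y z w`, since terms depending on
only three of the points vanish. Here `K` is twelve times a projection, and on its range the four
operators obtained by replacing one of the points by `v` sum to twelve; hence `K x y z w` is at
most that sum, which says that the last term of the identity is nonpositive.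
-/

section FourPoints

variable {V : Type*}

lemma nodup_four_iff {x y z w : V} : [x, y, z, w].Nodup ↔
    (x ≠ y ∧ x ≠ z ∧ x ≠ w) ∧ (y ≠ z ∧ y ≠ w) ∧ z ≠ w := by
  simp

lemma nodup_swap₁₂ (x y z w : V) : [y, x, z, w].Nodup ↔ [x, y, z, w].Nodup :=
  (List.Perm.swap _ _ _).nodup_iff

lemma nodup_swap₂₃ (x y z w : V) : [x, z, y, w].Nodup ↔ [x, y, z, w].Nodup :=
  ((List.Perm.swap _ _ _).cons x).nodup_iff

lemma nodup_swap₃₄ (x y z w : V) : [x, y, w, z].Nodup ↔ [x, y, z, w].Nodup :=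
  (((List.Perm.swap _ _ _).cons y).cons x).nodup_iff

lemma four_points_induction {p : V → V → V → V → Prop}
    (swap₁₂ : ∀ x y z w, p y x z w → p x y z w) (swap₂₃ : ∀ x y z w, p x z y w → p x y z w)
    (swap₃₄ : ∀ x y z w, p x y w z → p x y z w) (eq₁₂ : ∀ x z w, p x x z w)
    (nodup : ∀ x y z w, [x, y, z, w].Nodup → p x y z w) (x y z w : V) : p x y z w := by
  have eq₁₃ (x y w : V) : p x y x w := swap₂₃ _ _ _ _ (eq₁₂ x y w)
  have eq₂₃ (x y w : V) : p x y y w := swap₁₂ _ _ _ _ (eq₁₃ y x w)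
  have eq₁₄ (x y z : V) : p x y z x := swap₃₄ _ _ _ _ (eq₁₃ x y z)
  have eq₂₄ (x y z : V) : p x y z y := swap₃₄ _ _ _ _ (eq₂₃ x y z)
  have eq₃₄ (x y z : V) : p x y z z := swap₂₃ _ _ _ _ (eq₂₄ x z y)
  by_contra hp
  refine hp (nodup x y z w (nodup_four_iff.2 ⟨⟨?_, ?_, ?_⟩, ⟨?_, ?_⟩, ?_⟩)) <;> rintro rfl
  exacts [hp (eq₁₂ ..), hp (eq₁₃ ..), hp (eq₁₄ ..), hp (eq₂₃ ..), hp (eq₂₄ ..), hp (eq₃₄ ..)]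

/-- The sum of `F` over the six ways to split four points into an ordered pair of pairs. -/
def pairingSum {M : Type*} [AddCommGroup M] (F : V → V → V → V → M) (x y z w : V) : M :=
  F x y z w + F z w x y + F x z y w + F y w x z + F x w y z + F y z x w

/-- The sum of `F` over the four triples among four points. -/
def tripleSum {M : Type*} [AddCommGroup M] (F : V → V → V → M) (x y z w : V) : M :=
  F x y z + F x y w + F x z w + F y z w

end FourPoints

section Transpositions

variable {V A : Type*} [DecidableEq V] [Ring A] (ρ : Equiv.Perm V →* A)

/-- The image of the transposition `(x y)` under a multiplicative map `ρ` from `Perm V` to a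
ring; it is `1` if `x = y`. -/
def transposition (x y : V) : A := ρ (Equiv.swap x y)

local notation "τ" => transposition ρ

lemma transposition_comm (x y : V) : τ x y = τ y x := by
  rw [transposition, transposition, Equiv.swap_comm]

lemma transposition_self (x : V) : τ x x = 1 := by
  rw [transposition, Equiv.swap_self, ← Equiv.Perm.one_def, map_one]

lemma transposition_mul_self (x y : V) : τ x y * τ x y = 1 := by
  rw [transposition, ← map_mul, Equiv.swap_mul_self, map_one]

lemma transposition_mul_cancel_left (x y : V) (a : A) : τ x y * (τ x y * a) = a := by
  rw [← mul_assoc, transposition_mul_self, one_mul]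

lemma transposition_mul_transposition (x y z w : V) :
    τ x y * τ z w = τ (Equiv.swap x y z) (Equiv.swap x y w) * τ x y := by
  rw [transposition, transposition, transposition, ← map_mul, ← map_mul,
    Equiv.mul_swap_eq_swap_mul]

variable {x y z w v : V}

lemma transposition_mul_rotate (hxz : x ≠ z) (hyz : y ≠ z) : τ x y * τ y z = τ x z * τ x y := by
  rw [transposition_mul_transposition, Equiv.swap_apply_right,
    Equiv.swap_apply_of_ne_of_ne hxz.symm hyz.symm]

lemma commute_transposition (hxz : x ≠ z) (hxw : x ≠ w) (hyz : y ≠ z) (hyw : y ≠ w) :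
    Commute (τ x y) (τ z w) := by
  rw [Commute, SemiconjBy, transposition_mul_transposition,
    Equiv.swap_apply_of_ne_of_ne hxz.symm hyz.symm, Equiv.swap_apply_of_ne_of_ne hxw.symm hyw.symm]

/-- The sum of the images of the two three-cycles on `x, y, z`. -/
def cycleSum (x y z : V) : A := τ x y * τ y z + τ y z * τ x y

lemma cycleSum_reverse (x y z : V) : cycleSum ρ z y x = cycleSum ρ x y z := by
  rw [cycleSum, cycleSum, transposition_comm ρ z y, transposition_comm ρ y x, add_comm]

lemma cycleSum_eq_add_mul (hxz : x ≠ z) (hyz : y ≠ z) :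
    cycleSum ρ x y z = (τ x z + τ y z) * τ x y := by
  rw [cycleSum, transposition_mul_rotate ρ hxz hyz, add_mul]

lemma cycleSum_eq_mul_add (hxz : x ≠ z) (hyz : y ≠ z) :
    cycleSum ρ x y z = τ x y * (τ x z + τ y z) := by
  rw [cycleSum, transposition_comm ρ x y, mul_add, transposition_mul_rotate ρ hyz hxz, add_comm]

lemma cycleSum_swap₁₂ (hxz : x ≠ z) (hyz : y ≠ z) : cycleSum ρ y x z = cycleSum ρ x y z := by
  rw [cycleSum_eq_add_mul ρ hxz hyz, cycleSum_eq_add_mul ρ hyz hxz, transposition_comm ρ y x,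
    add_comm (τ y z)]

lemma cycleSum_swap₂₃ (hxy : x ≠ y) (hxz : x ≠ z) : cycleSum ρ x z y = cycleSum ρ x y z := by
  rw [← cycleSum_reverse, cycleSum_swap₁₂ ρ hxz.symm hxy.symm, cycleSum_reverse]

lemma transposition_conj (hxz : x ≠ z) (hyz : y ≠ z) : τ x y * τ y z * τ x y = τ x z := by
  rw [transposition_mul_rotate ρ hxz hyz, mul_assoc, transposition_mul_self, mul_one]

lemma transposition_braid (hxy : x ≠ y) (hxz : x ≠ z) (hyz : y ≠ z) :
    τ x y * τ y z * τ x y = τ y z * τ x y * τ y z := by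
  rw [transposition_conj ρ hxz hyz, transposition_comm ρ y z, transposition_comm ρ x y,
    transposition_conj ρ hxz.symm hxy.symm, transposition_comm]

lemma cycleSum_mul_self (hxy : x ≠ y) (hxz : x ≠ z) (hyz : y ≠ z) :
    cycleSum ρ x y z * cycleSum ρ x y z = cycleSum ρ x y z + 2 := by
  have hsq : τ x y * τ y z * (τ x y * τ y z) = τ y z * τ x y := by
    rw [← mul_assoc, transposition_braid ρ hxy hxz hyz, mul_assoc, transposition_mul_self, mul_one]
  have hsq' : τ y z * τ x y * (τ y z * τ x y) = τ x y * τ y z := by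
    rw [← mul_assoc, ← transposition_braid ρ hxy hxz hyz, mul_assoc, transposition_mul_self,
      mul_one]
  have hinv : τ x y * τ y z * (τ y z * τ x y) = 1 := by
    rw [mul_assoc, transposition_mul_cancel_left, transposition_mul_self]
  have hinv' : τ y z * τ x y * (τ x y * τ y z) = 1 := by
    rw [mul_assoc, transposition_mul_cancel_left, transposition_mul_self]
  rw [cycleSum, add_mul, mul_add, mul_add, hsq, hsq', hinv, hinv']
  rw [← one_add_one_eq_two]
  abel

/-- The sum of the images of the Klein four-group on `x, y, z, w`. -/
def kleinSum (x y z w : V) : A := 1 + τ x y * τ z w + τ x z * τ y w + τ x w * τ y z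

lemma transposition_mul_pairing (hxy : x ≠ y) (hxz : x ≠ z) (hxw : x ≠ w) (hyz : y ≠ z)
    (hyw : y ≠ w) (hzw : z ≠ w) :
    τ x y * (τ x z * τ y w) = τ z w * (τ x w * τ y z) := by
  simp only [transposition, ← map_mul]
  congr 1
  ext t
  grind [Equiv.Perm.mul_apply]

lemma kleinSum_swap₁₂ (h : [x, y, z, w].Nodup) : kleinSum ρ y x z w = kleinSum ρ x y z w := by
  obtain ⟨⟨hxy, hxz, hxw⟩, ⟨hyz, hyw⟩, hzw⟩ := nodup_four_iff.1 h
  rw [kleinSum, kleinSum, transposition_comm ρ y x,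
    (commute_transposition ρ hxy.symm hyw hxz.symm hzw : Commute (τ y z) (τ x w)).eq,
    (commute_transposition ρ hxy.symm hyz hxw.symm hzw.symm : Commute (τ y w) (τ x z)).eq]
  abel

lemma kleinSum_swap₂₃ (x y z w : V) : kleinSum ρ x z y w = kleinSum ρ x y z w := by
  rw [kleinSum, kleinSum, transposition_comm ρ z y]
  abel

lemma kleinSum_swap₃₄ (x y z w : V) : kleinSum ρ x y w z = kleinSum ρ x y z w := by
  rw [kleinSum, kleinSum, transposition_comm ρ w z]
  abel

lemma commute_transposition_kleinSum (h : [x, y, z, w].Nodup) :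
    Commute (τ x y) (kleinSum ρ x y z w) := by
  obtain ⟨⟨-, hxz, hxw⟩, ⟨hyz, hyw⟩, -⟩ := nodup_four_iff.1 h
  have hy : ∀ t, x ≠ t → y ≠ t → SemiconjBy (τ x y) (τ y t) (τ x t) := fun t =>
    transposition_mul_rotate ρ
  have hx : ∀ t, x ≠ t → y ≠ t → SemiconjBy (τ x y) (τ x t) (τ y t) := fun t hxt hyt => by
    rw [transposition_comm ρ x y]
    exact transposition_mul_rotate ρ hyt hxt
  have hs : SemiconjBy (τ x y) (kleinSum ρ x y z w) (kleinSum ρ y x z w) := by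
    rw [kleinSum, kleinSum, transposition_comm ρ y x]
    exact ((((SemiconjBy.one_right _).add_right
      ((Commute.refl _).mul_right (commute_transposition ρ hxz hxw hyz hyw))).add_right
      ((hx z hxz hyz).mul_right (hy w hxw hyw))).add_right
      ((hx w hxw hyw).mul_right (hy z hxz hyz)))
  rwa [kleinSum_swap₁₂ ρ h] at hs

lemma commute_cycleSum_kleinSum (h : [x, y, z, w].Nodup) :
    Commute (cycleSum ρ x y z) (kleinSum ρ x y z w) := by
  have hxy := commute_transposition_kleinSum ρ h
  have hyz : Commute (τ y z) (kleinSum ρ x y z w) := by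
    rw [← kleinSum_swap₁₂ ρ h, ← kleinSum_swap₂₃]
    exact commute_transposition_kleinSum ρ ((nodup_swap₂₃ ..).2 ((nodup_swap₁₂ ..).2 h))
  exact (hxy.mul_left hyz).add_left (hyz.mul_left hxy)

lemma transposition_mul_kleinSum (h : [x, y, z, w].Nodup) :
    τ x y * kleinSum ρ x y z w = τ z w * kleinSum ρ x y z w := by
  obtain ⟨⟨hxy, hxz, hxw⟩, ⟨hyz, hyw⟩, hzw⟩ := nodup_four_iff.1 h
  have hcomm : τ x y * τ z w = τ z w * τ x y := commute_transposition ρ hxz hxw hyz hyw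
  have hpairing := transposition_mul_pairing ρ hxy hxz hxw hyz hyw hzw
  have hpairing' := transposition_mul_pairing ρ hxy hxw hxz hyw hyz hzw.symm
  rw [transposition_comm ρ w z] at hpairing'
  simp only [kleinSum, mul_add, mul_one, transposition_mul_cancel_left, hpairing, hpairing']
  rw [hcomm, transposition_mul_cancel_left]
  abel

lemma kleinSum_mul_cycleSum (h : [x, y, z, w].Nodup) :
    kleinSum ρ x y z w * cycleSum ρ x y z =
      cycleSum ρ x y z + cycleSum ρ x y w + cycleSum ρ x z w + cycleSum ρ y z w := by
  obtain ⟨⟨hxy, hxz, hxw⟩, ⟨hyz, hyw⟩, hzw⟩ := nodup_four_iff.1 h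
  have hxyzw : τ x y * τ z w * cycleSum ρ x y z = τ z w * (τ x z + τ y z) := by
    rw [cycleSum_eq_mul_add ρ hxz hyz, (commute_transposition ρ hxz hxw hyz hyw).eq, mul_assoc,
      transposition_mul_cancel_left]
  have hxzyw : τ x z * τ y w * cycleSum ρ x y z = τ y w * (τ x y + τ y z) := by
    rw [← cycleSum_swap₂₃ ρ hxy hxz, cycleSum_eq_mul_add ρ hxy hyz.symm,
      (commute_transposition ρ hxy hxw hyz.symm hzw).eq, mul_assoc, transposition_mul_cancel_left,
      transposition_comm ρ z y]
  have hxwyz : τ x w * τ y z * cycleSum ρ x y z = τ x w * (τ x y + τ x z) := by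
    rw [← cycleSum_swap₁₂ ρ hxz hyz, ← cycleSum_swap₂₃ ρ hxy.symm hyz,
      cycleSum_eq_mul_add ρ hxy.symm hxz.symm, mul_assoc, transposition_mul_cancel_left,
      transposition_comm ρ y x, transposition_comm ρ z x]
  rw [kleinSum, add_mul, add_mul, add_mul, hxyzw, hxzyw, hxwyz, one_mul,
    cycleSum_eq_add_mul ρ hxw hyw, cycleSum_eq_add_mul ρ hxw hzw, cycleSum_eq_add_mul ρ hyw hzw]
  noncomm_ring

/-- Twelve times the central idempotent of the two-dimensional irreducible representation of the
symmetric group on `x, y, z, w`, written out from its character; zero if the points are not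
distinct. -/
def kleinElement (x y z w : V) : A :=
  if [x, y, z, w].Nodup then 2 * kleinSum ρ x y z w -
    (cycleSum ρ x y z + cycleSum ρ x y w + cycleSum ρ x z w + cycleSum ρ y z w) else 0

lemma kleinElement_of_nodup (h : [x, y, z, w].Nodup) :
    kleinElement ρ x y z w = 2 * kleinSum ρ x y z w -
      (cycleSum ρ x y z + cycleSum ρ x y w + cycleSum ρ x z w + cycleSum ρ y z w) :=
  if_pos h

lemma kleinElement_of_not_nodup (h : ¬[x, y, z, w].Nodup) : kleinElement ρ x y z w = 0 :=
  if_neg h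

lemma kleinElement_eq_mul (h : [x, y, z, w].Nodup) :
    kleinElement ρ x y z w = kleinSum ρ x y z w * (2 - cycleSum ρ x y z) := by
  rw [mul_sub, kleinSum_mul_cycleSum ρ h, mul_two, ← two_mul, kleinElement_of_nodup ρ h]

lemma kleinElement_swap₁₂ (x y z w : V) : kleinElement ρ y x z w = kleinElement ρ x y z w := by
  refine ite_congr (propext (nodup_swap₁₂ x y z w)) (fun h => ?_) fun _ => rfl
  obtain ⟨⟨-, hxz, hxw⟩, ⟨hyz, hyw⟩, -⟩ := nodup_four_iff.1 h
  rw [kleinSum_swap₁₂ ρ h, cycleSum_swap₁₂ ρ hxz hyz, cycleSum_swap₁₂ ρ hxw hyw]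
  abel

lemma kleinElement_swap₂₃ (x y z w : V) : kleinElement ρ x z y w = kleinElement ρ x y z w := by
  refine ite_congr (propext (nodup_swap₂₃ x y z w)) (fun h => ?_) fun _ => rfl
  obtain ⟨⟨hxy, hxz, -⟩, ⟨-, hyw⟩, hzw⟩ := nodup_four_iff.1 h
  rw [kleinSum_swap₂₃, cycleSum_swap₂₃ ρ hxy hxz, cycleSum_swap₁₂ ρ hyw hzw]
  abel

lemma kleinElement_swap₃₄ (x y z w : V) : kleinElement ρ x y w z = kleinElement ρ x y z w := by
  refine ite_congr (propext (nodup_swap₃₄ x y z w)) (fun h => ?_) fun _ => rfl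
  obtain ⟨⟨-, hxz, hxw⟩, ⟨hyz, hyw⟩, -⟩ := nodup_four_iff.1 h
  rw [kleinSum_swap₃₄, cycleSum_swap₂₃ ρ hxz hxw, cycleSum_swap₂₃ ρ hyz hyw]
  abel

lemma transposition_mul_kleinElement₁₂ (x y z w : V) :
    τ x y * kleinElement ρ x y z w = τ z w * kleinElement ρ x y z w := by
  by_cases h : [x, y, z, w].Nodup
  · rw [kleinElement_eq_mul ρ h, ← mul_assoc, ← mul_assoc, transposition_mul_kleinSum ρ h]
  · rw [kleinElement_of_not_nodup ρ h, mul_zero, mul_zero]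

lemma transposition_mul_kleinElement₁₃ (x y z w : V) :
    τ x z * kleinElement ρ x y z w = τ y w * kleinElement ρ x y z w := by
  rw [← kleinElement_swap₂₃, transposition_mul_kleinElement₁₂]

lemma transposition_mul_kleinElement₁₄ (x y z w : V) :
    τ x w * kleinElement ρ x y z w = τ y z * kleinElement ρ x y z w := by
  rw [← kleinElement_swap₃₄, transposition_mul_kleinElement₁₃]

lemma cycleSum_mul_kleinElement₁₂₃ (x y z w : V) :
    cycleSum ρ x y z * kleinElement ρ x y z w = -kleinElement ρ x y z w := by
  by_cases h : [x, y, z, w].Nodup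
  · obtain ⟨⟨hxy, hxz, -⟩, ⟨hyz, -⟩, -⟩ := nodup_four_iff.1 h
    rw [kleinElement_eq_mul ρ h, ← mul_assoc, (commute_cycleSum_kleinSum ρ h).eq, mul_assoc,
      mul_sub, cycleSum_mul_self ρ hxy hxz hyz]
    noncomm_ring
  · rw [kleinElement_of_not_nodup ρ h, mul_zero, neg_zero]

lemma cycleSum_mul_kleinElement₁₂₄ (x y z w : V) :
    cycleSum ρ x y w * kleinElement ρ x y z w = -kleinElement ρ x y z w := by
  rw [← kleinElement_swap₃₄, cycleSum_mul_kleinElement₁₂₃]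

lemma cycleSum_mul_kleinElement₁₃₄ (x y z w : V) :
    cycleSum ρ x z w * kleinElement ρ x y z w = -kleinElement ρ x y z w := by
  rw [← kleinElement_swap₂₃, cycleSum_mul_kleinElement₁₂₄]

lemma cycleSum_mul_kleinElement₂₃₄ (x y z w : V) :
    cycleSum ρ y z w * kleinElement ρ x y z w = -kleinElement ρ x y z w := by
  rw [← kleinElement_swap₁₂, cycleSum_mul_kleinElement₁₃₄]

lemma kleinElement_mul_self (x y z w : V) :
    kleinElement ρ x y z w * kleinElement ρ x y z w = 12 * kleinElement ρ x y z w := by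
  by_cases h : [x, y, z, w].Nodup
  · conv_lhs => enter [1]; rw [kleinElement_of_nodup ρ h, kleinSum]
    simp only [sub_mul, add_mul, mul_assoc, one_mul, ← transposition_mul_kleinElement₁₂,
      ← transposition_mul_kleinElement₁₃, ← transposition_mul_kleinElement₁₄,
      transposition_mul_cancel_left, cycleSum_mul_kleinElement₁₂₃, cycleSum_mul_kleinElement₁₂₄,
      cycleSum_mul_kleinElement₁₃₄, cycleSum_mul_kleinElement₂₃₄]
    noncomm_ring
  · rw [kleinElement_of_not_nodup ρ h, mul_zero, mul_zero]

lemma cycleSum_eq_add_mul' (hxy : x ≠ y) (hxz : x ≠ z) :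
    cycleSum ρ x y z = (τ x y + τ x z) * τ y z := by
  rw [← cycleSum_reverse, cycleSum_eq_add_mul ρ hxz.symm hxy.symm, transposition_comm ρ z y,
    transposition_comm ρ z x, transposition_comm ρ y x, add_comm]

lemma kleinElement_mul_of_cycleSum_mul (h : [v, x, y, z].Nodup) {a : A}
    (ha : cycleSum ρ x y z * a = -a) :
    kleinElement ρ v x y z * a = 3 * a +
      τ v x * (2 * (τ y z * a) - τ x y * a - τ x z * a) +
      τ v y * (2 * (τ x z * a) - τ x y * a - τ y z * a) +
      τ v z * (2 * (τ x y * a) - τ x z * a - τ y z * a) := by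
  obtain ⟨⟨hvx, hvy, hvz⟩, -, -⟩ := nodup_four_iff.1 h
  rw [kleinElement_of_nodup ρ h, kleinSum, sub_mul, add_mul, ha, cycleSum_eq_add_mul' ρ hvx hvy,
    cycleSum_eq_add_mul' ρ hvx hvz, cycleSum_eq_add_mul' ρ hvy hvz]
  noncomm_ring

lemma sum_kleinElement_mul_kleinElement (hv : [v, x, y, z, w].Nodup) :
    (kleinElement ρ v y z w + kleinElement ρ x v z w + kleinElement ρ x y v w +
      kleinElement ρ x y z v) * kleinElement ρ x y z w = 12 * kleinElement ρ x y z w := by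
  rw [kleinElement_swap₁₂ ρ v x, kleinElement_swap₂₃ ρ x v y, kleinElement_swap₁₂ ρ v x y,
    kleinElement_swap₃₄ ρ x y v z, kleinElement_swap₂₃ ρ x v y z, kleinElement_swap₁₂ ρ v x y z,
    add_mul, add_mul, add_mul,
    kleinElement_mul_of_cycleSum_mul ρ (by grind) (cycleSum_mul_kleinElement₂₃₄ ρ x y z w),
    kleinElement_mul_of_cycleSum_mul ρ (by grind) (cycleSum_mul_kleinElement₁₃₄ ρ x y z w),
    kleinElement_mul_of_cycleSum_mul ρ (by grind) (cycleSum_mul_kleinElement₁₂₄ ρ x y z w),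
    kleinElement_mul_of_cycleSum_mul ρ (by grind) (cycleSum_mul_kleinElement₁₂₃ ρ x y z w),
    ← transposition_mul_kleinElement₁₂, ← transposition_mul_kleinElement₁₃,
    ← transposition_mul_kleinElement₁₄]
  noncomm_ring

/-- The Laplacian `2 - c - c⁻¹` of the three-cycles `c, c⁻¹` on `x, y, z`; zero if the points are
not distinct. -/
def cycleLaplacian (x y z : V) : A := if [x, y, z].Nodup then 2 - cycleSum ρ x y z else 0

lemma cycleLaplacian_of_nodup (h : [x, y, z].Nodup) :
    cycleLaplacian ρ x y z = 2 - cycleSum ρ x y z :=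
  if_pos h

lemma cycleLaplacian_of_not_nodup (h : ¬[x, y, z].Nodup) : cycleLaplacian ρ x y z = 0 :=
  if_neg h

lemma cycleLaplacian_swap₁₂ (x y z : V) : cycleLaplacian ρ y x z = cycleLaplacian ρ x y z := by
  refine ite_congr (propext (List.Perm.swap _ _ _).nodup_iff) (fun h => ?_) fun _ => rfl
  rw [cycleSum_swap₁₂ ρ (by grind) (by grind)]

lemma cycleLaplacian_swap₂₃ (x y z : V) : cycleLaplacian ρ x z y = cycleLaplacian ρ x y z := by
  refine ite_congr (propext ((List.Perm.swap _ _ _).cons x).nodup_iff) (fun h => ?_) fun _ => rfl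
  rw [cycleSum_swap₂₃ ρ (by grind) (by grind)]

/-- The product of the transpositions `(x y)` and `(z w)`, with the opposite sign and corrected
on the diagonal `x = y` so that its symmetrization is a sum of three-cycle Laplacians up to
`kleinElement`. -/
def pairElement (x y z w : V) : A :=
  (if x = y then 2 * τ z w - 2 else 0) - τ x y * τ z w

lemma pairElement_swap₁₂ (x y z w : V) : pairElement ρ y x z w = pairElement ρ x y z w := by
  simp only [pairElement, transposition_comm ρ y x, eq_comm]

lemma pairElement_swap₃₄ (x y z w : V) : pairElement ρ x y w z = pairElement ρ x y z w := by
  simp only [pairElement, transposition_comm ρ w z]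

lemma pairElement_of_ne (hxy : x ≠ y) (z w : V) : pairElement ρ x y z w = -(τ x y * τ z w) := by
  rw [pairElement, if_neg hxy, zero_sub]

lemma pairElement_self_left (x z w : V) : pairElement ρ x x z w = τ z w - 2 := by
  rw [pairElement, if_pos rfl, transposition_self, one_mul, two_mul]
  abel

lemma pairElement_self_right (x z w : V) : pairElement ρ z w x x = -τ z w := by
  rw [pairElement, transposition_self, mul_one, mul_one, sub_self, ite_self, zero_sub]

lemma pairElement_add_pairElement_of_common_point (x z w : V) :
    pairElement ρ x z x w + pairElement ρ x w x z + 2 = cycleLaplacian ρ x z w := by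
  by_cases h : [x, z, w].Nodup
  · obtain ⟨hxz, hxw, hzw⟩ : x ≠ z ∧ x ≠ w ∧ z ≠ w := by simpa [and_assoc] using h
    rw [cycleLaplacian_of_nodup ρ h, ← cycleSum_swap₁₂ ρ hxw hzw, cycleSum,
      pairElement_of_ne ρ hxz, pairElement_of_ne ρ hxw, transposition_comm ρ z x]
    abel
  · rw [cycleLaplacian_of_not_nodup ρ h]
    obtain rfl | rfl | rfl : x = z ∨ x = w ∨ z = w := by grind
    · rw [pairElement_self_left, pairElement_self_right]
      abel
    · rw [pairElement_self_left, pairElement_self_right]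
      abel
    · by_cases hxz : x = z
      · rw [hxz, pairElement_self_left, transposition_self, ← one_add_one_eq_two]
        abel
      · rw [pairElement_of_ne ρ hxz, transposition_mul_self, ← one_add_one_eq_two]
        abel

lemma pairingSum_pairElement_self (x z w : V) :
    pairingSum (pairElement ρ) x x z w + 6 = tripleSum (cycleLaplacian ρ) x x z w := by
  have hdeg (t : V) : cycleLaplacian ρ x x t = 0 := cycleLaplacian_of_not_nodup ρ (by simp)
  rw [pairingSum, tripleSum, hdeg, hdeg, ← pairElement_add_pairElement_of_common_point,
    pairElement_self_left, pairElement_self_right]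
  grind

lemma pairingSum_pairElement_add_kleinElement (x y z w : V) :
    pairingSum (pairElement ρ) x y z w + kleinElement ρ x y z w + 6 =
      tripleSum (cycleLaplacian ρ) x y z w := by
  induction x, y, z, w using four_points_induction with
  | swap₁₂ x y z w ih =>
    rw [kleinElement_swap₁₂] at ih
    simp only [pairingSum, tripleSum, pairElement_swap₁₂ ρ x y, pairElement_swap₃₄ ρ _ _ x y,
      cycleLaplacian_swap₁₂ ρ x y] at ih ⊢
    rw [add_right_comm (cycleLaplacian ρ x y z + _), ← ih]
    abel
  | swap₂₃ x y z w ih =>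
    rw [kleinElement_swap₂₃] at ih
    simp only [pairingSum, tripleSum, pairElement_swap₁₂ ρ y z, pairElement_swap₃₄ ρ _ _ y z,
      cycleLaplacian_swap₁₂ ρ y z, cycleLaplacian_swap₂₃ ρ x y z] at ih ⊢
    rw [add_right_comm (cycleLaplacian ρ x y z), ← ih]
    abel
  | swap₃₄ x y z w ih =>
    rw [kleinElement_swap₃₄] at ih
    simp only [pairingSum, tripleSum, pairElement_swap₁₂ ρ z w, pairElement_swap₃₄ ρ _ _ z w,
      cycleLaplacian_swap₂₃ ρ _ z w] at ih ⊢
    rw [add_comm (cycleLaplacian ρ x y z), ← ih]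
    abel
  | eq₁₂ x z w =>
    rw [kleinElement_of_not_nodup ρ (by simp), add_zero, pairingSum_pairElement_self]
  | nodup x y z w h =>
    obtain ⟨⟨hxy, hxz, hxw⟩, ⟨hyz, hyw⟩, hzw⟩ := nodup_four_iff.1 h
    rw [kleinElement_of_nodup ρ h, kleinSum]
    simp only [pairingSum, tripleSum, pairElement_of_ne ρ hxy, pairElement_of_ne ρ hxz,
      pairElement_of_ne ρ hxw, pairElement_of_ne ρ hyz, pairElement_of_ne ρ hyw,
      pairElement_of_ne ρ hzw,
      (commute_transposition ρ hxz hxw hyz hyw).eq,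
      (commute_transposition ρ hxy hxw hyz.symm hzw).eq,
      (commute_transposition ρ hxy hxz hyw.symm hzw.symm).eq]
    rw [cycleLaplacian_of_nodup ρ (by grind), cycleLaplacian_of_nodup ρ (by grind),
      cycleLaplacian_of_nodup ρ (by grind), cycleLaplacian_of_nodup ρ (by grind)]
    grind

end Transpositions

section LoewnerOrder

open LinearMap

variable {E : Type*} [NormedAddCommGroup E] [InnerProductSpace ℝ E]

instance instPosSMulMonoEnd : PosSMulMono ℝ (Module.End ℝ E) :=
  PosSMulMono.of_smul_nonneg fun _ hr _ hT =>
    (nonneg_iff_isPositive _).2 (((nonneg_iff_isPositive _).1 hT).smul_of_nonneg hr)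

lemma mul_self_nonneg_of_isSymmetric {T : Module.End ℝ E} (hT : T.IsSymmetric) : 0 ≤ T * T := by
  refine (nonneg_iff_isPositive _).2 ⟨hT.mul_of_commute hT (Commute.refl T), fun u => ?_⟩
  rw [Module.End.mul_apply, hT]
  exact real_inner_self_nonneg

lemma nonneg_of_mul_self_eq_smul {P : Module.End ℝ E} {r : ℝ} (hr : 0 < r) (hP : P.IsSymmetric)
    (hPP : P * P = r • P) : 0 ≤ P := by
  rw [← inv_smul_smul₀ hr.ne' P, ← hPP]
  exact smul_nonneg (inv_nonneg.2 hr.le) (mul_self_nonneg_of_isSymmetric hP)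

lemma le_of_mul_eq_smul {S P : Module.End ℝ E} {r : ℝ} (hr : 0 < r) (hS : 0 ≤ S)
    (hP : P.IsSymmetric) (hPP : P * P = r • P) (hSP : S * P = r • P) : P ≤ S := by
  replace hS := (nonneg_iff_isPositive _).1 hS
  have hPP' (u : E) : P (P u) = r • P u := LinearMap.congr_fun hPP u
  have hSP' (u : E) : S (P u) = r • P u := LinearMap.congr_fun hSP u
  refine (le_def _ _).2 ⟨hS.isSymmetric.sub hP, fun u => ?_⟩
  have hSP_inner : inner ℝ (S u) (P u) = r * inner ℝ (P u) u := by
    rw [hS.isSymmetric, hSP', inner_smul_right, real_inner_comm]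
  have hPP_inner : inner ℝ (P u) (P u) = r * inner ℝ (P u) u := by
    rw [hP, hPP', inner_smul_right, real_inner_comm]
  have hexpand : inner ℝ (S (r • u - P u)) (r • u - P u) = r ^ 2 * inner ℝ ((S - P) u) u := by
    simp only [map_sub, map_smul, hSP', inner_sub_left, inner_sub_right, inner_smul_left,
      inner_smul_right, hSP_inner, hPP_inner, LinearMap.sub_apply, RCLike.conj_to_real]
    ring
  refine nonneg_of_mul_nonneg_right ?_ (pow_pos hr 2)
  rw [RCLike.re_to_real, ← hexpand]
  exact hS.re_inner_nonneg_left _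

variable {V : Type*} [DecidableEq V] {ρ : Equiv.Perm V →* Module.End ℝ E}

local notation "τ" => transposition ρ

lemma kleinElement_mul_self_eq_smul (x y z w : V) :
    kleinElement ρ x y z w * kleinElement ρ x y z w = (12 : ℝ) • kleinElement ρ x y z w := by
  rw [kleinElement_mul_self, Algebra.smul_def, map_ofNat]

variable (hρ : ∀ g u, ‖ρ g u‖ = ‖u‖)
include hρ

lemma isSymmetric_transposition (x y : V) : (τ x y).IsSymmetric := by
  intro u u'
  have hpres : inner ℝ (τ x y u) (τ x y (τ x y u')) = inner ℝ u (τ x y u') :=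
    (norm_map_iff_inner_map_map (ρ (Equiv.swap x y))).1 (hρ _) u (τ x y u')
  have hinvol : τ x y (τ x y u') = u' :=
    LinearMap.congr_fun (transposition_mul_self ρ x y) u'
  rwa [hinvol] at hpres

lemma isSymmetric_cycleSum (x y z : V) : (cycleSum ρ x y z).IsSymmetric := by
  intro u u'
  have hτ := isSymmetric_transposition hρ
  simp only [cycleSum, LinearMap.add_apply, inner_add_left, inner_add_right, Module.End.mul_apply]
  rw [hτ, hτ, hτ, hτ, add_comm]

lemma isSymmetric_kleinSum {x y z w : V} (h : [x, y, z, w].Nodup) :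
    (kleinSum ρ x y z w).IsSymmetric := by
  obtain ⟨⟨hxy, hxz, hxw⟩, ⟨hyz, hyw⟩, hzw⟩ := nodup_four_iff.1 h
  have hτ := isSymmetric_transposition hρ
  exact ((IsSymmetric.one.add
    ((hτ x y).mul_of_commute (hτ z w) (commute_transposition ρ hxz hxw hyz hyw))).add
    ((hτ x z).mul_of_commute (hτ y w) (commute_transposition ρ hxy hxw hyz.symm hzw))).add
    ((hτ x w).mul_of_commute (hτ y z) (commute_transposition ρ hxy hxz hyw.symm hzw.symm))

lemma isSymmetric_kleinElement (x y z w : V) : (kleinElement ρ x y z w).IsSymmetric := by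
  by_cases h : [x, y, z, w].Nodup
  · have hc := isSymmetric_cycleSum hρ
    have hk := isSymmetric_kleinSum hρ h
    rw [kleinElement_of_nodup ρ h, two_mul]
    exact (hk.add hk).sub ((((hc x y z).add (hc x y w)).add (hc x z w)).add (hc y z w))
  · rw [kleinElement_of_not_nodup ρ h]
    exact IsSymmetric.zero

lemma kleinElement_nonneg (x y z w : V) : 0 ≤ kleinElement ρ x y z w :=
  nonneg_of_mul_self_eq_smul (by norm_num) (isSymmetric_kleinElement hρ x y z w)
    (kleinElement_mul_self_eq_smul x y z w)

lemma kleinElement_le_sum (v x y z w : V) :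
    kleinElement ρ x y z w ≤ kleinElement ρ v y z w + kleinElement ρ x v z w +
      kleinElement ρ x y v w + kleinElement ρ x y z v := by
  have hK := kleinElement_nonneg hρ
  by_cases h : [v, x, y, z, w].Nodup
  · refine le_of_mul_eq_smul (by norm_num : (0 : ℝ) < 12)
      (add_nonneg (add_nonneg (add_nonneg (hK ..) (hK ..)) (hK ..)) (hK ..))
      (isSymmetric_kleinElement hρ x y z w) (kleinElement_mul_self_eq_smul x y z w) ?_
    rw [sum_kleinElement_mul_kleinElement ρ h, Algebra.smul_def, map_ofNat]
  by_cases h' : [x, y, z, w].Nodup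
  · obtain rfl | rfl | rfl | rfl : v = x ∨ v = y ∨ v = z ∨ v = w := by grind
    · exact le_add_of_le_of_nonneg (le_add_of_le_of_nonneg
        (le_add_of_nonneg_right (hK ..)) (hK ..)) (hK ..)
    · exact le_add_of_le_of_nonneg (le_add_of_le_of_nonneg
        (le_add_of_nonneg_left (hK ..)) (hK ..)) (hK ..)
    · exact le_add_of_le_of_nonneg (le_add_of_nonneg_left
        (add_nonneg (hK ..) (hK ..))) (hK ..)
    · exact le_add_of_nonneg_left (add_nonneg (add_nonneg (hK ..) (hK ..)) (hK ..))
  · rw [kleinElement_of_not_nodup ρ h']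
    exact add_nonneg (add_nonneg (add_nonneg (hK ..) (hK ..)) (hK ..)) (hK ..)

end LoewnerOrder

section QuadSum

variable {R M V : Type*} [CommRing R] [AddCommGroup M] [Module R M] [Fintype V]

/-- The sum of `F x y z w` over all quadruples of points, weighted by `c x * c y * c z * c w`. -/
def quadSum (c : V → R) (F : V → V → V → V → M) : M :=
  ∑ x, c x • ∑ y, c y • ∑ z, c z • ∑ w, c w • F x y z w

lemma weighted_sum_comm (c : V → R) (T : V → V → M) :
    ∑ x, c x • ∑ y, c y • T y x = ∑ x, c x • ∑ y, c y • T x y := by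
  simp only [smul_sum]
  rw [sum_comm]
  exact sum_congr rfl fun x _ => sum_congr rfl fun y _ => smul_comm _ _ _

lemma quadSum_swap₁₂ (c : V → R) (F : V → V → V → V → M) :
    quadSum c (fun x y z w => F y x z w) = quadSum c F :=
  weighted_sum_comm c fun x y => ∑ z, c z • ∑ w, c w • F x y z w

lemma quadSum_swap₂₃ (c : V → R) (F : V → V → V → V → M) :
    quadSum c (fun x y z w => F x z y w) = quadSum c F :=
  sum_congr rfl fun x _ => congrArg _ (weighted_sum_comm c fun y z => ∑ w, c w • F x y z w)

lemma quadSum_swap₃₄ (c : V → R) (F : V → V → V → V → M) :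
    quadSum c (fun x y z w => F x y w z) = quadSum c F :=
  sum_congr rfl fun x _ => congrArg _ <| sum_congr rfl fun y _ =>
    congrArg _ (weighted_sum_comm c fun z w => F x y z w)

lemma quadSum_add (c : V → R) (F G : V → V → V → V → M) :
    quadSum c (fun x y z w => F x y z w + G x y z w) = quadSum c F + quadSum c G := by
  simp only [quadSum, smul_add, sum_add_distrib]

lemma quadSum_sub (c : V → R) (F G : V → V → V → V → M) :
    quadSum c (fun x y z w => F x y z w - G x y z w) = quadSum c F - quadSum c G := by
  simp only [quadSum, smul_sub, sum_sub_distrib]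

lemma quadSum_pairingSum (c : V → R) (F : V → V → V → V → M) :
    quadSum c (pairingSum F) = 6 • quadSum c F := by
  have hxzyw : quadSum c (fun x y z w => F x z y w) = quadSum c F := quadSum_swap₂₃ c F
  have hxwyz : quadSum c (fun x y z w => F x w y z) = quadSum c F :=
    (quadSum_swap₃₄ c fun x y z w => F x z y w).trans hxzyw
  have hywxz : quadSum c (fun x y z w => F y w x z) = quadSum c F :=
    (quadSum_swap₁₂ c fun x y z w => F x w y z).trans hxwyz
  have hzwxy : quadSum c (fun x y z w => F z w x y) = quadSum c F :=
    (quadSum_swap₂₃ c fun x y z w => F y w x z).trans hywxz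
  have hyzxw : quadSum c (fun x y z w => F y z x w) = quadSum c F :=
    (quadSum_swap₁₂ c fun x y z w => F x z y w).trans hxzyw
  change quadSum c (fun x y z w => pairingSum F x y z w) = _
  simp only [pairingSum, quadSum_add, hxzyw, hxwyz, hywxz, hzwxy, hyzxw]
  abel

section SumEqZero

variable {c : V → R} (hc : ∑ x, c x = 0)
include hc

lemma quadSum_of_sum_eq_zero (F : V → V → V → M) : quadSum c (fun x y z _ => F x y z) = 0 := by
  simp only [quadSum, ← sum_smul, hc, zero_smul, smul_zero, sum_const_zero]

lemma quadSum_tripleSum (F : V → V → V → M) : quadSum c (tripleSum F) = 0 := by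
  have hxyz : quadSum c (fun x y z _ => F x y z) = 0 := quadSum_of_sum_eq_zero hc F
  have hxyw : quadSum c (fun x y _ w => F x y w) = 0 :=
    (quadSum_swap₃₄ c fun x y z _ => F x y z).trans hxyz
  have hxzw : quadSum c (fun x _ z w => F x z w) = 0 :=
    (quadSum_swap₂₃ c fun x y _ w => F x y w).trans hxyw
  have hyzw : quadSum c (fun _ y z w => F y z w) = 0 :=
    (quadSum_swap₁₂ c fun x _ z w => F x z w).trans hxzw
  change quadSum c (fun x y z w => tripleSum F x y z w) = _
  simp only [tripleSum, quadSum_add, hxyz, hxyw, hxzw, hyzw, add_zero]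

end SumEqZero

end QuadSum

section StarWeight

variable {R M V : Type*} [Fintype V] [DecidableEq V]

/-- The weights `a`, made to have total mass zero by moving their total mass to `v` with the
opposite sign. -/
def starWeight [Ring R] (a : V → R) (v x : V) : R := a x - if x = v then ∑ y, a y else 0

lemma sum_starWeight_smul [Ring R] [AddCommGroup M] [Module R M] (a : V → R) (v : V)
    (F : V → M) : ∑ x, starWeight a v x • F x = ∑ x, a x • (F x - F v) := by
  simp only [starWeight, sub_smul, smul_sub, sum_sub_distrib, ite_smul, zero_smul,
    sum_ite_eq', mem_univ, if_true, sum_smul]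

lemma sum_starWeight [Ring R] (a : V → R) (v : V) : ∑ x, starWeight a v x = 0 := by
  simpa using sum_starWeight_smul a v fun _ => (1 : R)

lemma quadSum_starWeight_nonpos [CommRing R] [PartialOrder R] [AddCommGroup M] [PartialOrder M]
    [IsOrderedAddMonoid M] [Module R M] [PosSMulMono R M] {a : V → R} (ha : ∀ x, 0 ≤ a x) (v : V)
    {F : V → V → V → V → M} (hF : ∀ x y z w, ¬[x, y, z, w].Nodup → F x y z w = 0)
    (hFv : ∀ x y z w, F x y z w ≤ F v y z w + F x v z w + F x y v w + F x y z v) :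
    quadSum (starWeight a v) F ≤ 0 := by
  simp only [quadSum, sum_starWeight_smul, ← sum_sub_distrib, ← smul_sub]
  refine sum_nonpos fun x _ => smul_nonpos_of_nonneg_of_nonpos (ha x) ?_
  refine sum_nonpos fun y _ => smul_nonpos_of_nonneg_of_nonpos (ha y) ?_
  refine sum_nonpos fun z _ => smul_nonpos_of_nonneg_of_nonpos (ha z) ?_
  refine sum_nonpos fun w _ => smul_nonpos_of_nonneg_of_nonpos (ha w) ?_
  have hF₁₂ (z w : V) : F v v z w = 0 := hF _ _ _ _ (by simp)
  have hF₁₃ (y w : V) : F v y v w = 0 := hF _ _ _ _ (by simp)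
  have hF₁₄ (y z : V) : F v y z v = 0 := hF _ _ _ _ (by simp)
  have hF₂₃ (x w : V) : F x v v w = 0 := hF _ _ _ _ (by simp)
  have hF₂₄ (x z : V) : F x v z v = 0 := hF _ _ _ _ (by simp)
  have hF₃₄ (x y : V) : F x y v v = 0 := hF _ _ _ _ (by simp)
  simp only [hF₁₂, hF₁₃, hF₁₄, hF₂₃, hF₂₄, hF₃₄, sub_zero]
  convert sub_nonpos.2 (hFv x y z w) using 1
  abel

end StarWeight

section TranspositionSum

variable {R A V : Type*} [CommRing R] [Ring A] [Algebra R A] [Fintype V] [DecidableEq V]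
  (ρ : Equiv.Perm V →* A)

/-- The sum of the images of all transpositions `(x y)`, weighted by `c x * c y`. -/
def transpositionSum (c : V → R) : A := ∑ x, c x • ∑ y, c y • transposition ρ x y

lemma quadSum_pairElement {c : V → R} (hc : ∑ x, c x = 0) :
    quadSum c (pairElement ρ) = (2 * ∑ x, c x ^ 2) • transpositionSum ρ c -
      transpositionSum ρ c * transpositionSum ρ c := by
  have hdiag : quadSum c (fun x y z w => if x = y then 2 * transposition ρ z w - 2 else 0) =
      (2 * ∑ x, c x ^ 2) • transpositionSum ρ c := by
    have hinner : ∑ z, c z • ∑ w, c w • (2 * transposition ρ z w - 2) =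
        (2 : R) • transpositionSum ρ c := by
      simp only [smul_sub, sum_sub_distrib, ← sum_smul, hc, zero_smul, sub_zero,
        transpositionSum, smul_sum, two_smul, two_mul, smul_add]
    have hite (x y : V) : (∑ z, c z • ∑ w, c w •
        if x = y then 2 * transposition ρ z w - 2 else 0) =
          if x = y then (2 : R) • transpositionSum ρ c else 0 := by
      split_ifs
      exacts [hinner, by simp]
    simp only [quadSum, hite]
    simp only [smul_ite, smul_zero, sum_ite_eq, mem_univ, if_true, smul_smul, ← sum_smul, mul_sum]
    congr 1
    exact sum_congr rfl fun x _ => by ring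
  have hprod : quadSum c (fun x y z w => transposition ρ x y * transposition ρ z w) =
      transpositionSum ρ c * transpositionSum ρ c := by
    simp only [quadSum, transpositionSum, sum_mul, smul_mul_assoc]
    simp only [mul_sum, mul_smul_comm]
  rw [← hdiag, ← hprod, ← quadSum_sub]
  rfl

lemma transpositionSum_mul_self {c : V → R} (hc : ∑ x, c x = 0) :
    (12 * ∑ x, c x ^ 2) • transpositionSum ρ c + quadSum c (kleinElement ρ) =
      6 • (transpositionSum ρ c * transpositionSum ρ c) := by
  have hsum : quadSum c (pairingSum (pairElement ρ)) + quadSum c (kleinElement ρ) +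
      quadSum c (fun _ _ _ _ => 6) = quadSum c (tripleSum (cycleLaplacian ρ)) := by
    rw [← quadSum_add, ← quadSum_add]
    simp only [pairingSum_pairElement_add_kleinElement]
  rw [quadSum_pairingSum, quadSum_pairElement ρ hc, quadSum_tripleSum hc,
    quadSum_of_sum_eq_zero hc fun _ _ _ => (6 : A)] at hsum
  rw [← sub_eq_zero, ← hsum]
  module

end TranspositionSum

section Octopus

variable {V E : Type*} [DecidableEq V] [NormedAddCommGroup E] [InnerProductSpace ℝ E]
  {ρ : Equiv.Perm V →* Module.End ℝ E}

lemma norm_transposition_sub_sq (hρ : ∀ g u, ‖ρ g u‖ = ‖u‖) (x y : V) (u : E) :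
    ‖transposition ρ x y u - u‖ ^ 2 = 2 * ‖u‖ ^ 2 - 2 * inner ℝ (transposition ρ x y u) u := by
  rw [norm_sub_sq_real, transposition, hρ]
  ring

variable [Fintype V]

lemma isSymmetric_transpositionSum (hρ : ∀ g u, ‖ρ g u‖ = ‖u‖) (c : V → ℝ) :
    (transpositionSum ρ c).IsSymmetric := by
  intro u u'
  simp only [transpositionSum, LinearMap.sum_apply, LinearMap.smul_apply, sum_inner, inner_sum,
    inner_smul_left, inner_smul_right, RCLike.conj_to_real, isSymmetric_transposition hρ _ _ u u']

lemma transpositionSum_starWeight_nonneg (hρ : ∀ g u, ‖ρ g u‖ = ‖u‖) {a : V → ℝ}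
    (ha : ∀ x, 0 ≤ a x) (v : V) : 0 ≤ transpositionSum ρ (starWeight a v) := by
  set c := starWeight a v
  have hsq : transpositionSum ρ c * transpositionSum ρ c ≥ 0 :=
    mul_self_nonneg_of_isSymmetric (isSymmetric_transpositionSum hρ c)
  have hklein : quadSum c (kleinElement ρ) ≤ 0 :=
    quadSum_starWeight_nonpos ha v (fun _ _ _ _ => kleinElement_of_not_nodup ρ)
      (kleinElement_le_sum hρ v)
  have hmul : 0 ≤ (12 * ∑ x, c x ^ 2) • transpositionSum ρ c := by
    rw [eq_sub_of_add_eq (transpositionSum_mul_self ρ (sum_starWeight a v))]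
    exact sub_nonneg.2 (hklein.trans (nsmul_nonneg hsq 6))
  obtain hzero | hpos := (sum_nonneg fun x _ => sq_nonneg (c x) : 0 ≤ ∑ x, c x ^ 2).eq_or_lt
  · have hc (x : V) : c x = 0 := by
      simpa using (sum_eq_zero_iff_of_nonneg fun x _ => sq_nonneg (c x)).1 hzero.symm x
    simp [transpositionSum, hc]
  · rw [← inv_smul_smul₀ (mul_pos (by norm_num) hpos : (0 : ℝ) < 12 * ∑ x, c x ^ 2).ne'
      (transpositionSum ρ c)]
    exact smul_nonneg (by positivity) hmul

lemma sum_starWeight_mul_norm_transposition_sub_sq_nonpos (hρ : ∀ g u, ‖ρ g u‖ = ‖u‖) {a : V → ℝ}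
    (ha : ∀ x, 0 ≤ a x) (v : V) (u : E) :
    ∑ x, starWeight a v x * ∑ y, starWeight a v y * ‖transposition ρ x y u - u‖ ^ 2 ≤ 0 := by
  have hpos : 0 ≤ inner ℝ (transpositionSum ρ (starWeight a v) u) u :=
    ((LinearMap.nonneg_iff_isPositive _).1
      (transpositionSum_starWeight_nonneg hρ ha v)).re_inner_nonneg_left u
  have hsum : ∑ x, starWeight a v x * ∑ y, starWeight a v y * ‖transposition ρ x y u - u‖ ^ 2 =
      -2 * inner ℝ (transpositionSum ρ (starWeight a v) u) u := by
    simp only [norm_transposition_sub_sq hρ, mul_sub, sum_sub_distrib, ← sum_mul,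
      sum_starWeight, zero_mul, zero_sub, transpositionSum, LinearMap.sum_apply,
      LinearMap.smul_apply, sum_inner, inner_smul_left, RCLike.conj_to_real]
    simp only [mul_left_comm _ (2 : ℝ), ← mul_sum, mul_neg, sum_neg_distrib, neg_mul]
  rw [hsum]
  linarith

/-- The octopus inequality of Caputo, Liggett and Richthammer for the squared increments `ε` along
the edges: replacing a star centred at `v` by the complete graph with the weights of the star-mesh
transformation does not increase the Dirichlet form. -/
def OctopusInequality {V : Type*} [Fintype V] (ε : V → V → ℝ) : Prop :=
  ∀ (a : V → ℝ) (v : V), (∀ x, 0 ≤ a x) →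
    (1 / 2) * ∑ x, ∑ y, a x * a y / (∑ z, a z) * ε x y ≤ ∑ x, a x * ε v x

lemma sum_starWeight_mul_sum_starWeight_mul {ε : V → V → ℝ} (hε : ∀ x y, ε x y = ε y x)
    (hε₀ : ∀ x, ε x x = 0) (a : V → ℝ) (v : V) :
    ∑ x, starWeight a v x * ∑ y, starWeight a v y * ε x y =
      ∑ x, ∑ y, a x * a y * ε x y - 2 * (∑ x, a x) * ∑ x, a x * ε v x := by
  simp only [← smul_eq_mul (starWeight a v _), sum_starWeight_smul, hε₀, sub_zero]
  simp only [smul_eq_mul, mul_sub, sum_sub_distrib, ← sum_mul, hε _ v]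
  simp only [mul_assoc, mul_left_comm _ (∑ z, a z), ← mul_sum]
  ring

lemma octopusInequality_of_sum_starWeight_nonpos {ε : V → V → ℝ} (hε : ∀ x y, ε x y = ε y x)
    (hε₀ : ∀ x, ε x x = 0)
    (h : ∀ (a : V → ℝ) (v : V), (∀ x, 0 ≤ a x) →
      ∑ x, starWeight a v x * ∑ y, starWeight a v y * ε x y ≤ 0) :
    OctopusInequality ε := by
  intro a v ha
  have hsum := h a v ha
  rw [sum_starWeight_mul_sum_starWeight_mul hε hε₀] at hsum
  obtain hzero | hpos := (sum_nonneg fun x _ => ha x : 0 ≤ ∑ x, a x).eq_or_lt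
  · have ha₀ (x : V) : a x = 0 :=
      (sum_eq_zero_iff_of_nonneg fun x _ => ha x).1 hzero.symm x (mem_univ x)
    simp [ha₀]
  · simp only [div_mul_eq_mul_div (b := ∑ z, a z), ← sum_div]
    rw [mul_div_assoc', div_le_iff₀ hpos]
    linarith

lemma octopusInequality_norm_transposition_sub_sq (hρ : ∀ g u, ‖ρ g u‖ = ‖u‖) (u : E) :
    OctopusInequality fun x y : V => ‖transposition ρ x y u - u‖ ^ 2 :=
  octopusInequality_of_sum_starWeight_nonpos
    (fun x y => by rw [transposition_comm]) (fun x => by simp [transposition_self])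
    fun _ v ha => sum_starWeight_mul_norm_transposition_sub_sq_nonpos hρ ha v u

end Octopus

section EffectiveConductance

variable {V : Type*} [Fintype V]

/-- The Dirichlet form with conductances `c` evaluated at the squared increments `ε`. The double
sum runs over ordered pairs, hence the factor `1 / 2`. -/
def dirichletSum (c ε : V → V → ℝ) : ℝ := (1 / 2) * ∑ z, ∑ w, c z w * ε z w

lemma elEnergy_eq_dirichletSum (c : V → V → ℝ) (h : V → ℝ) :
    elEnergy c h = dirichletSum c fun z w => (h z - h w) ^ 2 :=
  rfl

variable {c : V → V → ℝ}

lemma dirichletSum_eq_of_support_pair (hsymm : ∀ z w, c z w = c w z) {ε : V → V → ℝ}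
    (hε : ∀ z w, ε z w = ε w z) (hε₀ : ∀ z, ε z z = 0) {x y : V} (hxy : x ≠ y)
    (hc : ∀ z, z ≠ x → z ≠ y → ∀ w, c z w = 0) : dirichletSum c ε = c x y * ε x y := by
  have hx : ∑ w, c x w * ε x w = c x y * ε x y :=
    Fintype.sum_eq_single y fun w hwy => by
      obtain rfl | hwx := eq_or_ne w x
      · rw [hε₀, mul_zero]
      · rw [hsymm, hc w hwx hwy, zero_mul]
  have hy : ∑ w, c y w * ε y w = c y x * ε y x :=
    Fintype.sum_eq_single x fun w hwx => by
      obtain rfl | hwy := eq_or_ne w y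
      · rw [hε₀, mul_zero]
      · rw [hsymm, hc w hwx hwy, zero_mul]
  rw [dirichletSum, Fintype.sum_eq_add x y hxy fun z hz => sum_eq_zero fun w _ => by
    rw [hc z hz.1 hz.2, zero_mul], hx, hy, hsymm y x, hε y x]
  ring

section Nonneg

variable (hnn : ∀ z w, 0 ≤ c z w)
include hnn

lemma elEnergy_nonneg (h : V → ℝ) : 0 ≤ elEnergy c h :=
  mul_nonneg one_half_pos.le
    (sum_nonneg fun z _ => sum_nonneg fun w _ => mul_nonneg (hnn z w) (sq_nonneg _))

lemma ceff_le_elEnergy {x y : V} {h : V → ℝ} (hx : h x = 1) (hy : h y = 0) :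
    ceff c x y ≤ elEnergy c h :=
  csInf_le ⟨0, by rintro _ ⟨h, -, -, rfl⟩; exact elEnergy_nonneg hnn h⟩ ⟨h, hx, hy, rfl⟩

end Nonneg

lemma le_ceff {x y : V} (hxy : x ≠ y) {b : ℝ}
    (hb : ∀ h : V → ℝ, h x = 1 → h y = 0 → b ≤ elEnergy c h) : b ≤ ceff c x y := by
  classical
  refine le_csInf ⟨_, Pi.single x 1, by simp, by simp [hxy.symm], rfl⟩ ?_
  rintro _ ⟨h, hx, hy, rfl⟩
  exact hb h hx hy

lemma ceff_le_of_support_pair (hnn : ∀ z w, 0 ≤ c z w) (hsymm : ∀ z w, c z w = c w z) {x y : V}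
    (hxy : x ≠ y) (hc : ∀ z, z ≠ x → z ≠ y → ∀ w, c z w = 0) : ceff c x y ≤ c x y := by
  classical
  refine (ceff_le_elEnergy hnn (h := Pi.single x 1) (by simp) (by simp [hxy.symm])).trans_eq ?_
  rw [elEnergy_eq_dirichletSum, dirichletSum_eq_of_support_pair hsymm (fun z w => by ring)
    (fun z => by simp) hxy hc]
  simp [hxy.symm]

section Symmetric

variable (hnn : ∀ z w, 0 ≤ c z w) (hsymm : ∀ z w, c z w = c w z)
include hnn hsymm

lemma mul_sq_le_elEnergy (h : V → ℝ) (z w : V) : c z w * (h z - h w) ^ 2 ≤ elEnergy c h := by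
  classical
  obtain rfl | hzw := eq_or_ne z w
  · simpa using elEnergy_nonneg hnn h
  have hterm (u u' : V) : 0 ≤ c u u' * (h u - h u') ^ 2 := mul_nonneg (hnn u u') (sq_nonneg _)
  have hrow (u u' : V) : c u u' * (h u - h u') ^ 2 ≤ ∑ t, c u t * (h u - h t) ^ 2 :=
    single_le_sum (f := fun t => c u t * (h u - h t) ^ 2) (fun t _ => hterm u t) (mem_univ u')
  have hrows : ∑ u ∈ {z, w}, ∑ t, c u t * (h u - h t) ^ 2 ≤ ∑ u, ∑ t, c u t * (h u - h t) ^ 2 :=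
    sum_le_sum_of_subset_of_nonneg (subset_univ _) fun u _ _ => sum_nonneg fun t _ => hterm u t
  rw [sum_pair hzw] at hrows
  have hsq : c w z * (h w - h z) ^ 2 = c z w * (h z - h w) ^ 2 := by rw [hsymm w z]; ring
  unfold elEnergy
  linarith [hrow z w, hrow w z]

lemma exists_sq_sub_le_mul_elEnergy {x y : V}
    (hxy : (SimpleGraph.fromRel fun z w => 0 < c z w).Reachable x y) :
    ∃ K : ℝ, 0 ≤ K ∧ ∀ h : V → ℝ, (h x - h y) ^ 2 ≤ K * elEnergy c h := by
  obtain ⟨p⟩ := hxy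
  induction p with
  | nil => exact ⟨0, le_rfl, fun h => by simp⟩
  | @cons u v w huv _ ih =>
    obtain ⟨K, hK, ih⟩ := ih
    have hc : 0 < c u v := huv.2.elim id fun h => hsymm u v ▸ h
    refine ⟨2 * (c u v)⁻¹ + 2 * K, by positivity, fun h => ?_⟩
    have hedge : (h u - h v) ^ 2 ≤ (c u v)⁻¹ * elEnergy c h := by
      rw [inv_mul_eq_div, le_div_iff₀' hc]
      exact mul_sq_le_elEnergy hnn hsymm h u v
    calc (h u - h w) ^ 2 = ((h u - h v) + (h v - h w)) ^ 2 := by ring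
      _ ≤ 2 * ((h u - h v) ^ 2 + (h v - h w) ^ 2) := add_sq_le
      _ ≤ 2 * ((c u v)⁻¹ * elEnergy c h + K * elEnergy c h) := by gcongr; exact ih h
      _ = (2 * (c u v)⁻¹ + 2 * K) * elEnergy c h := by ring

lemma ceff_pos {x y : V} (hxy : x ≠ y)
    (hreach : (SimpleGraph.fromRel fun z w => 0 < c z w).Reachable x y) : 0 < ceff c x y := by
  obtain ⟨K, hK, hbound⟩ := exists_sq_sub_le_mul_elEnergy hnn hsymm hreach
  have hK' : 0 < K + 1 := by linarith
  refine (inv_pos.2 hK').trans_le (le_ceff hxy fun h hx hy => ?_)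
  have hone : 1 ≤ K * elEnergy c h := by simpa [hx, hy] using hbound h
  rw [inv_le_iff_one_le_mul₀ hK']
  linarith [elEnergy_nonneg hnn h]

end Symmetric

end EffectiveConductance

section StarMesh

variable {V : Type*}

lemma sum_mul_sq_sub_mean [Fintype V] {a : V → ℝ} (ha : ∀ z, 0 ≤ a z) (h : V → ℝ) :
    ∑ w, a w * ((∑ z, a z * h z) / (∑ z, a z) - h w) ^ 2 =
      (1 / 2) * ∑ z, ∑ w, a z * a w / (∑ u, a u) * (h z - h w) ^ 2 := by
  obtain hzero | hpos := (sum_nonneg fun x _ => ha x : 0 ≤ ∑ x, a x).eq_or_lt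
  · have ha₀ (x : V) : a x = 0 :=
      (sum_eq_zero_iff_of_nonneg fun x _ => ha x).1 hzero.symm x (mem_univ x)
    simp [ha₀]
  set s := ∑ z, a z with hs
  set m := ∑ z, a z * h z with hm
  have hleft (w : V) : a w * (m / s - h w) ^ 2 =
      (m / s) ^ 2 * a w - 2 * (m / s) * (a w * h w) + a w * h w ^ 2 := by ring
  have hright (z w : V) : a z * a w / s * (h z - h w) ^ 2 =
      s⁻¹ * (a z * h z ^ 2 * a w - 2 * (a z * h z * (a w * h w)) + a z * (a w * h w ^ 2)) := by
    ring
  simp only [hleft, hright, sum_add_distrib, sum_sub_distrib, ← mul_sum, ← sum_mul, ← hs, ← hm]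
  field_simp
  ring

variable [DecidableEq V]

/-- The conductances between `v` and the other vertices; no loop at `v` is counted. -/
def starPart (c : V → V → ℝ) (v z : V) : ℝ := if z = v then 0 else c v z

/-- The network with `v` and all edges at `v` removed. -/
def awayPart (c : V → V → ℝ) (v z w : V) : ℝ := if z = v ∨ w = v then 0 else c z w

lemma starPart_nonneg {c : V → V → ℝ} (hnn : ∀ z w, 0 ≤ c z w) (v z : V) : 0 ≤ starPart c v z := by
  unfold starPart
  split_ifs
  exacts [le_rfl, hnn _ _]

lemma awayPart_nonneg {c : V → V → ℝ} (hnn : ∀ z w, 0 ≤ c z w) (v z w : V) :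
    0 ≤ awayPart c v z w := by
  unfold awayPart
  split_ifs
  exacts [le_rfl, hnn _ _]

variable [Fintype V]

/-- The star-mesh transform of the network `c` at `v`: the star of edges at `v` is replaced by
conductances between its leaves, leaving `v` isolated. -/
def starMesh (c : V → V → ℝ) (v z w : V) : ℝ :=
  awayPart c v z w + starPart c v z * starPart c v w / ∑ u, starPart c v u

lemma starMesh_nonneg {c : V → V → ℝ} (hnn : ∀ z w, 0 ≤ c z w) (v z w : V) :
    0 ≤ starMesh c v z w :=
  add_nonneg (awayPart_nonneg hnn v z w)
    (div_nonneg (mul_nonneg (starPart_nonneg hnn v z) (starPart_nonneg hnn v w))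
      (sum_nonneg fun u _ => starPart_nonneg hnn v u))

lemma dirichletSum_starMesh (c ε : V → V → ℝ) (v : V) :
    dirichletSum (starMesh c v) ε = dirichletSum (awayPart c v) ε +
      (1 / 2) * ∑ z, ∑ w, starPart c v z * starPart c v w / (∑ u, starPart c v u) * ε z w := by
  simp only [dirichletSum, starMesh, add_mul, sum_add_distrib]
  ring

variable {c : V → V → ℝ} (hsymm : ∀ z w, c z w = c w z)
include hsymm

lemma starMesh_symm (v z w : V) : starMesh c v z w = starMesh c v w z := by
  simp only [starMesh, awayPart, hsymm z w, mul_comm (starPart c v z), or_comm]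

lemma starMesh_eq_zero {v z : V} (hz : z = v ∨ ∀ w, c z w = 0) (w : V) :
    starMesh c v z w = 0 := by
  obtain rfl | hz := hz
  · simp [starMesh, awayPart, starPart]
  · simp [starMesh, awayPart, starPart, hz, hsymm v z]

lemma dirichletSum_eq_awayPart_add_starPart {ε : V → V → ℝ} (hε : ∀ z w, ε z w = ε w z)
    (hε₀ : ∀ z, ε z z = 0) (v : V) :
    dirichletSum c ε = dirichletSum (awayPart c v) ε + ∑ w, starPart c v w * ε v w := by
  have hterm (z w : V) : c z w * ε z w = awayPart c v z w * ε z w +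
      ((if z = v then starPart c v w * ε v w else 0) +
        if w = v then starPart c v z * ε v z else 0) := by
    by_cases hz : z = v <;> by_cases hw : w = v
    · simp [hz, hw, awayPart, hε₀]
    · simp [awayPart, starPart, hz, hw]
    · simp [awayPart, starPart, hz, hw, hsymm z, hε z]
    · simp [awayPart, hz, hw]
  have hrow : ∑ z, ∑ w, (if z = v then starPart c v w * ε v w else 0) =
      ∑ w, starPart c v w * ε v w := by
    rw [sum_comm]
    simp
  have hcol : ∑ z, ∑ w, (if w = v then starPart c v z * ε v z else 0) =
      ∑ w, starPart c v w * ε v w := by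
    simp
  simp only [dirichletSum, hterm, sum_add_distrib, hrow, hcol]
  ring

lemma elEnergy_update_mean (hnn : ∀ z w, 0 ≤ c z w) (v : V) (h : V → ℝ) :
    elEnergy c (Function.update h v ((∑ z, starPart c v z * h z) / ∑ z, starPart c v z)) =
      elEnergy (starMesh c v) h := by
  set m := (∑ z, starPart c v z * h z) / ∑ z, starPart c v z with hm
  rw [elEnergy_eq_dirichletSum, elEnergy_eq_dirichletSum,
    dirichletSum_eq_awayPart_add_starPart hsymm (fun z w => by ring) (fun z => by simp) v,
    dirichletSum_starMesh, ← sum_mul_sq_sub_mean (starPart_nonneg hnn v)]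
  refine congrArg₂ (· + ·) (congrArg (1 / 2 * ·) <| sum_congr rfl fun z _ =>
    sum_congr rfl fun w _ => ?_) (sum_congr rfl fun w _ => ?_)
  · obtain rfl | hz := eq_or_ne z v
    · simp [awayPart]
    obtain rfl | hw := eq_or_ne w v
    · simp [awayPart]
    simp [hz, hw]
  · obtain rfl | hw := eq_or_ne w v
    · simp [starPart]
    simp [hw, hm]

lemma ceff_le_ceff_starMesh (hnn : ∀ z w, 0 ≤ c z w) {v x y : V} (hxy : x ≠ y) (hx : x ≠ v)
    (hy : y ≠ v) : ceff c x y ≤ ceff (starMesh c v) x y := by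
  refine le_ceff hxy fun h hhx hhy => ?_
  rw [← elEnergy_update_mean hsymm hnn]
  exact ceff_le_elEnergy hnn (by simp [hx, hhx]) (by simp [hy, hhy])

lemma dirichletSum_starMesh_le (hnn : ∀ z w, 0 ≤ c z w) {ε : V → V → ℝ}
    (hε : ∀ z w, ε z w = ε w z) (hε₀ : ∀ z, ε z z = 0) (hoct : OctopusInequality ε) (v : V) :
    dirichletSum (starMesh c v) ε ≤ dirichletSum c ε := by
  rw [dirichletSum_starMesh, dirichletSum_eq_awayPart_add_starPart hsymm hε hε₀ v]
  exact add_le_add_right (hoct _ v (starPart_nonneg hnn v)) _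

end StarMesh

section Elimination

variable {V : Type*} [Fintype V] {c ε : V → V → ℝ} (hsymm : ∀ z w, c z w = c w z)
  (hnn : ∀ z w, 0 ≤ c z w) (hε : ∀ z w, ε z w = ε w z) (hε₀ : ∀ z, ε z z = 0)
  (hoct : OctopusInequality ε)
include hsymm hnn hε hε₀ hoct

lemma ceff_mul_le_dirichletSum_of_support {x y : V} (hxy : x ≠ y) (hεxy : 0 ≤ ε x y) (S : Finset V)
    (hxS : x ∉ S) (hyS : y ∉ S) (hS : ∀ z ∉ S, z ≠ x → z ≠ y → ∀ w, c z w = 0) :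
    ceff c x y * ε x y ≤ dirichletSum c ε := by
  classical
  induction S using Finset.induction_on generalizing c with
  | empty =>
    have hS' (z : V) : z ≠ x → z ≠ y → ∀ w, c z w = 0 := hS z (notMem_empty z)
    rw [dirichletSum_eq_of_support_pair hsymm hε hε₀ hxy hS']
    exact mul_le_mul_of_nonneg_right (ceff_le_of_support_pair hnn hsymm hxy hS') hεxy
  | insert v S _ ih =>
    simp only [mem_insert, not_or] at hxS hyS hS
    have hmesh (z : V) (hz : z ∉ S) (hzx : z ≠ x) (hzy : z ≠ y) : ∀ w, starMesh c v z w = 0 :=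
      starMesh_eq_zero hsymm <| or_iff_not_imp_left.2 fun hzv => hS z ⟨hzv, hz⟩ hzx hzy
    calc ceff c x y * ε x y ≤ ceff (starMesh c v) x y * ε x y :=
          mul_le_mul_of_nonneg_right (ceff_le_ceff_starMesh hsymm hnn hxy hxS.1 hyS.1) hεxy
      _ ≤ dirichletSum (starMesh c v) ε :=
          ih (starMesh_symm hsymm v) (starMesh_nonneg hnn v) hxS.2 hyS.2 hmesh
      _ ≤ dirichletSum c ε := dirichletSum_starMesh_le hsymm hnn hε hε₀ hoct v

theorem ceff_mul_le_dirichletSum {x y : V} (hxy : x ≠ y) (hεxy : 0 ≤ ε x y) :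
    ceff c x y * ε x y ≤ dirichletSum c ε := by
  classical
  exact ceff_mul_le_dirichletSum_of_support hsymm hnn hε hε₀ hoct hxy hεxy (univ \ {x, y}) (by simp)
    (by simp) fun z hz hzx hzy => by simp [hzx, hzy] at hz

end Elimination

section RightRegular

variable {G : Type*} [Group G] [Fintype G]

/-- The right regular representation of a finite group, acting on real functions by
`f ↦ fun h => f (h * g)`. -/
def rightRegular : G →* Module.End ℝ (EuclideanSpace ℝ G) where
  toFun g := (LinearIsometryEquiv.piLpCongrLeft 2 ℝ ℝ (Equiv.mulRight g).symm).toLinearMap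
  map_one' := by
    ext
    simp
  map_mul' g h := by
    ext
    simp [mul_assoc]

lemma norm_rightRegular (g : G) (u : EuclideanSpace ℝ G) : ‖rightRegular g u‖ = ‖u‖ :=
  LinearIsometryEquiv.norm_map _ u

lemma norm_rightRegular_sub_sq (g : G) (f : G → ℝ) :
    ‖rightRegular g (WithLp.toLp 2 f) - WithLp.toLp 2 f‖ ^ 2 = ∑ h, (f (h * g) - f h) ^ 2 := by
  simp [rightRegular, EuclideanSpace.real_norm_sq_eq]

end RightRegular

lemma octopusInequality_perm {V : Type*} [Fintype V] [DecidableEq V] (f : Equiv.Perm V → ℝ) :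
    OctopusInequality fun x y => ∑ η, (f (η * Equiv.swap x y) - f η) ^ 2 := by
  simpa only [transposition, norm_rightRegular_sub_sq] using
    octopusInequality_norm_transposition_sub_sq norm_rightRegular (WithLp.toLp 2 f)

theorem moving_particle_lemma_interchange_general {V : Type*} [Fintype V] [DecidableEq V]
    (c : V → V → ℝ) (hnn : ∀ z w, 0 ≤ c z w) (hsymm : ∀ z w, c z w = c w z) (x y : V)
    (hxy : x ≠ y) (hreach : (SimpleGraph.fromRel fun z w => 0 < c z w).Reachable x y)
    (f : Equiv.Perm V → ℝ) :
    (1 / 2) * permExp (fun η => (f (η * Equiv.swap x y) - f η) ^ 2) ≤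
      (ceff c x y)⁻¹ * ((1 / 2) * ((1 / 2) * ∑ z, ∑ w, c z w *
        permExp (fun η => (f (η * Equiv.swap z w) - f η) ^ 2))) := by
  have hmain := ceff_mul_le_dirichletSum hsymm hnn (fun z w => by simp only [Equiv.swap_comm])
    (fun z => by simp [Equiv.swap_self, ← Equiv.Perm.one_def]) (octopusInequality_perm f) hxy
    (sum_nonneg fun η _ => sq_nonneg _)
  have hcard : (0 : ℝ) < Fintype.card (Equiv.Perm V) := by exact_mod_cast Fintype.card_pos
  unfold dirichletSum at hmain
  rw [inv_mul_eq_div, le_div_iff₀' (ceff_pos hnn hsymm hxy hreach)]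
  simp only [permExp, ← mul_div_assoc, ← sum_div]
  rw [div_le_div_iff_of_pos_right hcard]
  linarith

theorem moving_particle_lemma_interchange {V : Type*} [Fintype V] [DecidableEq V]
    (c : V → V → ℝ) (hnn : ∀ z w, 0 ≤ c z w) (hsymm : ∀ z w, c z w = c w z)
    (hdiag : ∀ z, c z z = 0)
    (hconn : (SimpleGraph.fromRel fun z w => 0 < c z w).Connected)
    (x y : V) (hxy : x ≠ y) (f : Equiv.Perm V → ℝ) :
    (1 / 2) * permExp (fun η => (f (η * Equiv.swap x y) - f η) ^ 2) ≤
      (ceff c x y)⁻¹ * ((1 / 2) * ((1 / 2) * ∑ z, ∑ w, c z w *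
        permExp (fun η => (f (η * Equiv.swap z w) - f η) ^ 2))) :=
  moving_particle_lemma_interchange_general c hnn hsymm x y hxy (hconn.preconnected x y) f
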